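/- Let (λ_2, λ_3, ..., λ_n) be a list of complex numbers, closed under complex conjugation, with Re(λ_i) ≤ 0 for all i, let ρ ≥ 0 be real, and let f(x) := (x - ρ)·∏_{i=2}^n (x - λ_i) = x^n + a_1 x^{n-1} + a_2 x^{n-2} + ... + a_n (a real polynomial). If a_1 ≤ 0 and a_2 ≤ 0, then a_i ≤ 0 for all i = 3, 4, ..., n. -/

import Mathlib

open Polynomial

/-!
Write `f = (X - ρ) g`. Every real factor of the left half-plane polynomial `g` of degree at most two
has nonnegative coefficients, and multiplication by such a factor preserves the nonnegativity of the
entries and of the `2 × 2` minors of the Hurwitz matrix: by Cauchy–Binet, the new minors are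
nonnegative combinations of the old ones. With `g = b₀ xᵐ + b₁ xᵐ⁻¹ + ⋯` the claim reads
`bᵢ ≤ ρ bᵢ₋₁`; for odd `i` the minor `b₀ bᵢ ≤ b₁ bᵢ₋₁` reduces it to `b₁ ≤ ρ b₀`, and for even `i`
the minor `b₁ bᵢ ≤ b₂ bᵢ₋₁` reduces it to `b₂ ≤ ρ b₁` when `b₁ ≠ 0`. If `b₁ = 0`, then `b₂ = 0`,
and `b₀ bᵢ ≤ b₂ bᵢ₋₂` gives `bᵢ = 0`.
-/

/-- Nonnegativity of the entries and of the `2 × 2` minors of the bi-infinite Hurwitz matrix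
`(a (2 * q - p))` with rows `p` and columns `q`. In a minor, `i` is the smallest and `l` the largest
index; `j - i` is the difference of the two rows and `k - i` twice that of the two columns. -/
structure HurwitzNonneg {R : Type*} [Zero R] [Mul R] [LE R] (a : ℤ → R) : Prop where
  nonneg (k : ℤ) : 0 ≤ a k
  mul_le_mul {i j k l : ℤ} (hij : i ≤ j) (hik : i ≤ k) (hdvd : 2 ∣ k - i) (hsum : i + l = j + k) :
    a i * a l ≤ a j * a k

namespace HurwitzNonneg

variable {R : Type*} [CommRing R] [LinearOrder R] [IsStrictOrderedRing R]

theorem single {c : R} (hc : 0 ≤ c) (n : ℤ) : HurwitzNonneg (Pi.single n c) := by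
  have hnonneg : (0 : ℤ → R) ≤ Pi.single n c := Pi.single_nonneg.2 hc
  refine ⟨hnonneg, fun {i j k l} hij hik _ hsum ↦ ?_⟩
  have hjk := mul_nonneg (hnonneg j) (hnonneg k)
  by_cases hi : i = n
  · by_cases hl : l = n
    · obtain ⟨rfl, rfl⟩ : j = i ∧ k = l := by lia
      rfl
    · rwa [Pi.single_eq_of_ne hl, mul_zero]
  · rwa [Pi.single_eq_of_ne hi, zero_mul]

theorem quadratic_combination {a : ℤ → R} (ha : HurwitzNonneg a) {u v w : R} (hu : 0 ≤ u)
    (hv : 0 ≤ v) (hw : 0 ≤ w) :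
    HurwitzNonneg fun k ↦ u * a k + v * a (k - 1) + w * a (k - 2) := by
  refine ⟨fun k ↦ ?_, fun {i j k l} hij hik hdvd hsum ↦ ?_⟩
  · exact add_nonneg (add_nonneg (mul_nonneg hu (ha.nonneg _)) (mul_nonneg hv (ha.nonneg _)))
      (mul_nonneg hw (ha.nonneg _))
  obtain rfl | hij := hij.eq_or_lt
  · obtain rfl : l = k := by lia
    rfl
  obtain rfl | hik := hik.eq_or_lt
  · obtain rfl : l = j := by lia
    exact (mul_comm _ _).le
  have minor {c d : R} (hc : 0 ≤ c) (hd : 0 ≤ d) (i j k l : ℤ) (hij : i ≤ j := by lia)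
      (hik : i ≤ k := by lia) (hdvd : 2 ∣ k - i := by lia) (hsum : i + l = j + k := by lia) :
      0 ≤ c * d * (a j * a k - a i * a l) :=
    mul_nonneg (mul_nonneg hc hd) (sub_nonneg.2 (ha.mul_le_mul hij hik hdvd hsum))
  -- The Cauchy–Binet expansion: each product of two weights comes with minors of `a`.
  linarith [minor hu hu i j k l,
    minor hv hv (i - 1) (j - 1) (k - 1) (l - 1),
    minor hw hw (i - 2) (j - 2) (k - 2) (l - 2),
    minor hu hv (i - 1) j (k - 1) l, minor hu hv i (j - 1) k (l - 1),
    minor hv hw (i - 2) (j - 1) (k - 2) (l - 1), minor hv hw (i - 1) (j - 2) (k - 1) (l - 2),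
    minor hu hw (i - 2) (j - 2) k l, minor hu hw i j (k - 2) (l - 2)]

section Ratio

variable {a : ℤ → R} (ha : HurwitzNonneg a) {ρ : R} {p k : ℤ}
include ha

theorem le_mul_succ_of_dvd_sub (hp : 0 < a p) (hratio : a (p - 1) ≤ ρ * a p) (hk : k < p)
    (hdvd : 2 ∣ p - 1 - k) : a k ≤ ρ * a (k + 1) := by
  refine le_of_mul_le_mul_right ?_ hp
  calc a k * a p ≤ a (k + 1) * a (p - 1) := ha.mul_le_mul (by lia) (by lia) hdvd (by lia)
    _ ≤ a (k + 1) * (ρ * a p) := mul_le_mul_of_nonneg_left hratio (ha.nonneg _)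
    _ = ρ * a (k + 1) * a p := by ring

theorem eq_zero_of_dvd_sub (hp : 0 < a p) (hzero : a (p - 2) = 0) (hk : k < p)
    (hdvd : 2 ∣ p - k) : a k = 0 := by
  have hmul : a k * a p ≤ a (k + 2) * a (p - 2) :=
    ha.mul_le_mul (by lia) (by lia) (by lia) (by lia)
  rw [hzero, mul_zero] at hmul
  exact (nonpos_of_mul_nonpos_left hmul hp).antisymm (ha.nonneg k)

theorem le_mul_succ (hp : 0 < a p) (hratio₁ : a (p - 1) ≤ ρ * a p)
    (hratio₂ : a (p - 2) ≤ ρ * a (p - 1)) (hk : k < p) : a k ≤ ρ * a (k + 1) := by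
  obtain hodd | heven : 2 ∣ p - 1 - k ∨ 2 ∣ p - k := by lia
  · exact ha.le_mul_succ_of_dvd_sub hp hratio₁ hk hodd
  obtain hzero | hpos := (ha.nonneg (p - 1)).eq_or_lt
  · have hρ : 0 ≤ ρ := nonneg_of_mul_nonneg_left (hzero.trans_le hratio₁) hp
    have hzero₂ : a (p - 2) = 0 := by
      rw [← hzero, mul_zero] at hratio₂
      exact hratio₂.antisymm (ha.nonneg _)
    rw [ha.eq_zero_of_dvd_sub hp hzero₂ hk heven]
    exact mul_nonneg hρ (ha.nonneg _)
  · refine ha.le_mul_succ_of_dvd_sub hpos ?_ (by lia) (by lia)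
    rwa [sub_sub, one_add_one_eq_two]

end Ratio

end HurwitzNonneg

section IntCoeff

variable {R : Type*} [Semiring R]

/-- The coefficients of a polynomial as a bi-infinite sequence, zero at negative indices, so that
multiplication by `X` is a shift. -/
def intCoeff (g : R[X]) : ℤ → R
  | (k : ℕ) => g.coeff k
  | Int.negSucc _ => 0

@[simp]
theorem intCoeff_natCast (g : R[X]) (k : ℕ) : intCoeff g k = g.coeff k := rfl

theorem intCoeff_add (g h : R[X]) (k : ℤ) :
    intCoeff (g + h) k = intCoeff g k + intCoeff h k := by
  cases k <;> simp [intCoeff]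

theorem intCoeff_C_mul (c : R) (g : R[X]) (k : ℤ) : intCoeff (C c * g) k = c * intCoeff g k := by
  cases k <;> simp [intCoeff]

theorem intCoeff_X_mul (g : R[X]) : ∀ k : ℤ, intCoeff (X * g) k = intCoeff g (k - 1)
  | 0 => coeff_X_mul_zero g
  | (k + 1 : ℕ) => by
    rw [intCoeff_natCast, coeff_X_mul, Nat.cast_succ, add_sub_cancel_right, intCoeff_natCast]
  | Int.negSucc _ => rfl

theorem intCoeff_C (c : R) : intCoeff (C c) = Pi.single 0 c := by
  ext k
  cases k with
  | ofNat k => simp [intCoeff, Pi.single_apply, coeff_C]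
  | negSucc k => simp [intCoeff]

theorem intCoeff_mul_of_natDegree_le_two {q : R[X]} (hq : q.natDegree ≤ 2) (g : R[X]) (k : ℤ) :
    intCoeff (q * g) k = q.coeff 0 * intCoeff g k + q.coeff 1 * intCoeff g (k - 1) +
      q.coeff 2 * intCoeff g (k - 2) := by
  have hmul : q * g = C (q.coeff 0) * g + C (q.coeff 1) * (X * g) +
      C (q.coeff 2) * (X * (X * g)) := by
    conv_lhs => rw [q.as_sum_range_C_mul_X_pow' (Nat.lt_succ_of_le hq)]
    simp [Finset.sum_range_succ, add_mul, mul_assoc, pow_two]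
  simp only [hmul, intCoeff_add, intCoeff_C_mul, intCoeff_X_mul, sub_sub, one_add_one_eq_two]

end IntCoeff

theorem intCoeff_X_sub_C_mul {R : Type*} [Ring R] (c : R) (g : R[X]) (k : ℤ) :
    intCoeff ((X - C c) * g) k = intCoeff g (k - 1) - c * intCoeff g k := by
  rw [sub_eq_add_neg X, ← C_neg, add_mul, intCoeff_add, intCoeff_X_mul, intCoeff_C_mul, neg_mul,
    ← sub_eq_add_neg]

theorem minpoly_real_eq_of_im_ne_zero {z : ℂ} (hz : z.im ≠ 0) :
    minpoly ℝ z = X ^ 2 - C (2 * z.re) * X + C (‖z‖ ^ 2) := by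
  have hint : IsIntegral ℝ z := Algebra.IsIntegral.isIntegral z
  have hmonic : (X ^ 2 - C (2 * z.re) * X + C (‖z‖ ^ 2)).Monic := by monicity!
  refine (eq_of_dvd_of_natDegree_le_of_leadingCoeff
    (quadratic_dvd_of_aeval_eq_zero_im_ne_zero _ (minpoly.aeval ℝ z) hz) ?_ ?_).symm
  · have hdeg : (X ^ 2 - C (2 * z.re) * X + C (‖z‖ ^ 2)).natDegree = 2 := by compute_degree!
    exact (minpoly.irreducible hint).natDegree_le_two.trans_eq hdeg.symm
  · rw [hmonic.leadingCoeff, (minpoly.monic hint).leadingCoeff]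

theorem coeff_minpoly_real_nonneg {z : ℂ} (hz : z.re ≤ 0) (k : ℕ) :
    0 ≤ (minpoly ℝ z).coeff k := by
  by_cases him : z.im = 0
  · have hreal : z = algebraMap ℝ ℂ z.re := Complex.ext rfl him
    rw [hreal, minpoly.eq_X_sub_C, coeff_sub, coeff_X, coeff_C]
    split_ifs <;> linarith
  · rw [minpoly_real_eq_of_im_ne_zero him, coeff_add, coeff_sub, coeff_X_pow, coeff_C_mul, coeff_X,
      coeff_C]
    split_ifs <;> linarith [sq_nonneg ‖z‖]

theorem hurwitzNonneg_intCoeff {g : ℝ[X]} (hlead : 0 ≤ g.leadingCoeff)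
    (hroots : ∀ z : ℂ, aeval z g = 0 → z.re ≤ 0) : HurwitzNonneg (intCoeff g) := by
  induction hm : g.natDegree using Nat.strong_induction_on generalizing g with
  | _ m ih =>
  subst hm
  obtain hdeg | hdeg := Nat.eq_zero_or_pos g.natDegree
  · obtain ⟨c, rfl⟩ := natDegree_eq_zero.1 hdeg
    rw [leadingCoeff_C] at hlead
    exact intCoeff_C c ▸ .single hlead 0
  obtain ⟨z, hz⟩ := IsAlgClosed.exists_aeval_eq_zero ℂ g (natDegree_pos_iff_degree_pos.1 hdeg).ne'
  have hint : IsIntegral ℝ z := Algebra.IsIntegral.isIntegral z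
  obtain ⟨r, hr⟩ := minpoly.dvd ℝ z hz
  have hr0 : r ≠ 0 := by
    rintro rfl
    simp [hr] at hdeg
  have hlt : r.natDegree < g.natDegree := by
    rw [hr, (minpoly.monic hint).natDegree_mul' hr0]
    exact Nat.lt_add_of_pos_left (minpoly.natDegree_pos hint)
  have hrHurwitz : HurwitzNonneg (intCoeff r) := by
    refine ih _ hlt ?_ (fun y hy ↦ hroots y ?_) rfl
    · rwa [hr, leadingCoeff_monic_mul (minpoly.monic hint)] at hlead
    · rw [hr, map_mul, hy, mul_zero]
  have hcoeff := coeff_minpoly_real_nonneg (hroots z hz)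
  rw [hr, funext (intCoeff_mul_of_natDegree_le_two
    (minpoly.irreducible hint).natDegree_le_two r)]
  exact hrHurwitz.quadratic_combination (hcoeff 0) (hcoeff 1) (hcoeff 2)

theorem coeff_X_sub_C_mul_nonpos {g : ℝ[X]} (hlead : 0 < g.leadingCoeff)
    (hroots : ∀ z : ℂ, aeval z g = 0 → z.re ≤ 0) {ρ : ℝ}
    (h₁ : ((X - C ρ) * g).coeff g.natDegree ≤ 0)
    (h₂ : ((X - C ρ) * g).coeff (g.natDegree - 1) ≤ 0) {k : ℕ} (hk : k < g.natDegree) :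
    ((X - C ρ) * g).coeff k ≤ 0 := by
  have hcast : ((g.natDegree - 1 : ℕ) : ℤ) = g.natDegree - 1 := by lia
  rw [← intCoeff_natCast, intCoeff_X_sub_C_mul, sub_nonpos] at h₁ h₂ ⊢
  rw [hcast, sub_sub, one_add_one_eq_two] at h₂
  have hstep := (hurwitzNonneg_intCoeff hlead.le hroots).le_mul_succ (k := k - 1)
    (p := g.natDegree) hlead h₁ h₂ (by lia)
  rwa [sub_add_cancel] at hstep

theorem exists_eq_mul_of_map_eq_map_mul {K L : Type*} [Field K] [Field L] {φ : K →+* L}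
    {f d : K[X]} {q : L[X]} (hd : d ≠ 0) (h : f.map φ = d.map φ * q) :
    ∃ g : K[X], f = d * g ∧ g.map φ = q := by
  obtain ⟨g, rfl⟩ := (map_dvd_map' φ).1 ⟨q, h⟩
  rw [Polynomial.map_mul] at h
  exact ⟨g, rfl, mul_left_cancel₀ ((Polynomial.map_ne_zero_iff φ.injective).2 hd) h⟩

/-- **Lemma 1.5** (Laffey–Šmigoc).  Let `(λ₂, …, λₙ)` be a self-conjugate list of complex
numbers with nonpositive real parts, let `ρ ≥ 0`, and let
`f(x) = (x - ρ)·∏_{i=2}^n (x - λᵢ) = xⁿ + a₁xⁿ⁻¹ + ⋯ + aₙ` (a real polynomial).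
If `a₁, a₂ ≤ 0` then `aᵢ ≤ 0` for all `i = 3, …, n`.  (Here `aᵢ` is the coefficient of
`x^{n-i}` in `f`.) -/
theorem laffey_smigoc_lemma
    (n : ℕ) (ρ : ℝ) (hρ : 0 ≤ ρ) (lam : ℕ → ℂ)
    (hconj : Multiset.map (starRingEnd ℂ) ((Finset.Icc 2 n).val.map lam) =
      (Finset.Icc 2 n).val.map lam)
    (hre : ∀ i ∈ Finset.Icc 2 n, (lam i).re ≤ 0)
    (f : Polynomial ℝ) (hdeg : f.natDegree = n)
    (hf : f.map (algebraMap ℝ ℂ) = (Polynomial.X - Polynomial.C (ρ : ℂ)) *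
      ∏ i ∈ Finset.Icc 2 n, (Polynomial.X - Polynomial.C (lam i)))
    (ha1 : f.coeff (n - 1) ≤ 0) (ha2 : f.coeff (n - 2) ≤ 0) :
    ∀ i, 3 ≤ i → i ≤ n → f.coeff (n - i) ≤ 0 := by
  intro i hi hin
  obtain ⟨g, rfl, hg⟩ : ∃ g : ℝ[X], f = (X - C ρ) * g ∧
      g.map (algebraMap ℝ ℂ) = ∏ i ∈ Finset.Icc 2 n, (X - C (lam i)) :=
    exists_eq_mul_of_map_eq_map_mul (X_sub_C_ne_zero ρ) (by simpa using hf)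
  have hmonic : g.Monic :=
    monic_of_injective (algebraMap ℝ ℂ).injective (hg ▸ monic_prod_X_sub_C lam _)
  have hroots (z : ℂ) (hz : aeval z g = 0) : z.re ≤ 0 := by
    rw [← eval_map_algebraMap, hg, eval_prod, Finset.prod_eq_zero_iff] at hz
    obtain ⟨j, hj, hzj⟩ := hz
    rw [eval_sub, eval_X, eval_C, sub_eq_zero] at hzj
    exact hzj ▸ hre j hj
  have hn : n = g.natDegree + 1 := by
    rw [← hdeg, (monic_X_sub_C ρ).natDegree_mul hmonic, natDegree_X_sub_C, add_comm]
  subst hn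
  exact coeff_X_sub_C_mul_nonpos (hmonic.leadingCoeff ▸ one_pos) hroots ha1 ha2 (by lia)
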